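/- Suppose Q ⪰ I and R is positive semidefinite. Let K̂, K_* ∈ ℝ^{m×d} both satisfy ρ(A + BK̂) < 1 and ρ(A + BK_*) < 1, with corresponding Lyapunov solutions P̂ = P_{K̂,1} and P_* = P_{K_*,1}, and suppose tr(P̂) ≤ 2·tr(P_*). Then for every t ≥ 0 and every x₀ ∈ ℝ^d, the closed-loop state x_t = (A + BK̂)^t x₀ satisfies ‖x_t‖ ≤ √(2·tr(P_*)) · exp(−t / (4·tr(P_*))) · ‖x₀‖; that is, K̂ is (√(2·tr(P_*)), (4·tr(P_*))⁻¹)-exponentially stable. -/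

import Mathlib

open Matrix

/-- A real square matrix is stable if every complex eigenvalue has modulus `< 1`. -/
def IsStable {n : ℕ} (M : Matrix (Fin n) (Fin n) ℝ) : Prop :=
  ∀ μ ∈ spectrum ℂ (M.map Complex.ofReal), ‖μ‖ < 1

/-- Euclidean norm of a vector in `ℝ^n`. -/
noncomputable def evnorm {n : ℕ} (x : Fin n → ℝ) : ℝ :=
  ‖(WithLp.equiv 2 (Fin n → ℝ)).symm x‖

/-- `P_{K,1} = Σ_t ((A+BK)^t)ᵀ (Q + KᵀRK) (A+BK)^t`, the solution of the (undiscounted)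
Lyapunov equation when `A+BK` is stable. -/
noncomputable def lyapP {d m : ℕ} (A : Matrix (Fin d) (Fin d) ℝ) (B : Matrix (Fin d) (Fin m) ℝ)
    (Q : Matrix (Fin d) (Fin d) ℝ) (R : Matrix (Fin m) (Fin m) ℝ)
    (K : Matrix (Fin m) (Fin d) ℝ) : Matrix (Fin d) (Fin d) ℝ :=
  ∑' t : ℕ, ((A + B * K) ^ t)ᵀ * (Q + Kᵀ * R * K) * (A + B * K) ^ t

theorem ev_sq {n : ℕ} (x : Fin n → ℝ) : evnorm x ^ 2 = x ⬝ᵥ x := by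
  unfold evnorm
  rw [EuclideanSpace.norm_eq, Real.sq_sqrt (Finset.sum_nonneg fun i _ => sq_nonneg _)]
  simp [dotProduct, sq]

section
attribute [local instance] Matrix.linftyOpNormedRing Matrix.linftyOpNormedAlgebra

theorem stable_entry_bound {d : ℕ} (hd : 0 < d) (M : Matrix (Fin d) (Fin d) ℝ) (hM : IsStable M) :
    ∃ r : ℝ, 0 ≤ r ∧ r < 1 ∧ ∀ᶠ t : ℕ in Filter.atTop, ∀ i j, |(M ^ t) i j| ≤ r ^ t := by
  have : Nonempty (Fin d) := ⟨⟨0, hd⟩⟩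
  set a : Matrix (Fin d) (Fin d) ℂ := M.map Complex.ofReal with ha
  have h1 : spectralRadius ℂ a < ((1 : NNReal) : ENNReal) := by
    apply spectrum.spectralRadius_lt_of_forall_lt_of_nonempty (spectrum.nonempty a)
    intro k hk
    exact_mod_cast hM k hk
  obtain ⟨r, hr1, hr2⟩ := ENNReal.lt_iff_exists_nnreal_btwn.1 h1
  refine ⟨r, r.2, by exact_mod_cast hr2, ?_⟩
  have h2 := spectrum.pow_nnnorm_pow_one_div_tendsto_nhds_spectralRadius a
  filter_upwards [h2.eventually_lt_const hr1, Filter.eventually_gt_atTop 0] with t ht ht0 i j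
  have h3 : ‖a ^ t‖₊ ≤ r ^ t := by
    have h4 := ENNReal.rpow_le_rpow ht.le (Nat.cast_nonneg (α := ℝ) t)
    rw [← ENNReal.rpow_mul, one_div, inv_mul_cancel₀ (by positivity), ENNReal.rpow_one,
      ENNReal.rpow_natCast] at h4
    exact_mod_cast h4
  have h5 : ‖(a ^ t) i j‖₊ ≤ ‖a ^ t‖₊ := by
    rw [Matrix.linfty_opNNNorm_def]
    refine le_trans ?_ (Finset.le_sup (f := fun i => ∑ j, ‖(a ^ t) i j‖₊) (Finset.mem_univ i))
    exact Finset.single_le_sum (f := fun j => ‖(a ^ t) i j‖₊) (fun _ _ => zero_le) (Finset.mem_univ j)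
  have h6 : (a ^ t) i j = ((M ^ t) i j : ℂ) := by
    have : a ^ t = (M ^ t).map Complex.ofReal := by
      rw [ha]
      exact (Matrix.map_pow M Complex.ofRealHom t).symm
    rw [this]; rfl
  have h7 := h5.trans h3
  rw [h6] at h7
  have h8 : ‖((M ^ t) i j : ℂ)‖ ≤ (r : ℝ) ^ t := by exact_mod_cast h7
  simpa using h8
end

theorem lyap_summable {d : ℕ} (hd : 0 < d) (M S : Matrix (Fin d) (Fin d) ℝ) (hM : IsStable M) :
    Summable fun t : ℕ => (M ^ t)ᵀ * S * M ^ t := by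
  obtain ⟨r, hr0, hr1, hb⟩ := stable_entry_bound hd M hM
  refine Pi.summable.2 fun i => Pi.summable.2 fun j => ?_
  have hs : Summable fun t : ℕ => (∑ l, ∑ k, |S k l|) * (r ^ 2) ^ t :=
    (summable_geometric_of_lt_one (by positivity) (by nlinarith)).mul_left _
  refine hs.of_norm_bounded_eventually_nat ?_
  filter_upwards [hb] with t ht
  rw [Matrix.mul_apply, Finset.sum_mul]
  refine (norm_sum_le _ _).trans (Finset.sum_le_sum fun l _ => ?_)
  rw [Matrix.mul_apply, Finset.sum_mul, Finset.sum_mul]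
  refine (norm_sum_le _ _).trans (Finset.sum_le_sum fun k _ => ?_)
  rw [Real.norm_eq_abs, abs_mul, abs_mul, Matrix.transpose_apply]
  have e : |S k l| * (r ^ 2) ^ t = r ^ t * |S k l| * r ^ t := by ring
  rw [e]
  gcongr
  · exact ht k i
  · exact ht l j

open scoped MatrixOrder Matrix.Norms.L2Operator in
theorem quad_le_trace {d : ℕ} (P : Matrix (Fin d) (Fin d) ℝ) (hP : P.PosSemidef) (x : Fin d → ℝ) :
    x ⬝ᵥ P *ᵥ x ≤ P.trace * (x ⬝ᵥ x) := by
  obtain ⟨G, rfl⟩ : ∃ G : Matrix (Fin d) (Fin d) ℝ, P = Gᵀ * G := by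
    obtain ⟨G, hG⟩ := CStarAlgebra.nonneg_iff_eq_star_mul_self.mp hP.nonneg
    refine ⟨G, ?_⟩
    rw [hG, Matrix.star_eq_conjTranspose, Matrix.conjTranspose_eq_transpose_of_trivial]
  have h1 : x ⬝ᵥ (Gᵀ * G) *ᵥ x = ∑ i, (∑ j, G i j * x j) ^ 2 := by
    rw [← Matrix.mulVec_mulVec, Matrix.dotProduct_mulVec, Matrix.vecMul_transpose]
    simp [dotProduct, mulVec, sq]
  have h2 : (Gᵀ * G).trace = ∑ i, ∑ j, G i j ^ 2 := by
    rw [Finset.sum_comm]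
    simp [Matrix.trace, Matrix.mul_apply, sq]
  rw [h1, h2, Finset.sum_mul]
  refine Finset.sum_le_sum fun i _ => ?_
  have := Finset.sum_mul_sq_le_sq_mul_sq Finset.univ (fun j => G i j) x
  simpa [dotProduct, sq] using this

theorem core {d : ℕ} (hd : 0 < d) (M S : Matrix (Fin d) (Fin d) ℝ) (hM : IsStable M)
    (hS : (S - 1).PosSemidef) (P : Matrix (Fin d) (Fin d) ℝ)
    (hPd : P = ∑' t : ℕ, (M ^ t)ᵀ * S * M ^ t) :
    1 ≤ P.trace ∧ ∀ (t : ℕ) (x : Fin d → ℝ),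
      evnorm ((M ^ t) *ᵥ x) ^ 2 ≤ P.trace * Real.exp (-(t : ℝ) / P.trace) * evnorm x ^ 2 := by
  have hsum := lyap_summable hd M S hM
  have hS0 : S.PosSemidef := by
    have := hS.add (Matrix.PosSemidef.one (n := Fin d) (R := ℝ))
    simpa using this
  have hterm : ∀ t : ℕ, ((M ^ t)ᵀ * S * M ^ t).PosSemidef := fun t => by
    have := hS0.conjTranspose_mul_mul_same (M ^ t)
    rwa [Matrix.conjTranspose_eq_transpose_of_trivial] at this
  have hPsd : P.PosSemidef := by
    refine Matrix.PosSemidef.of_dotProduct_mulVec_nonneg ?_ fun x => ?_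
    · unfold Matrix.IsHermitian
      rw [hPd, Matrix.conjTranspose_tsum]
      exact tsum_congr fun t => (hterm t).1
    · have h : HasSum (fun t : ℕ => star x ⬝ᵥ ((M ^ t)ᵀ * S * M ^ t) *ᵥ x) (star x ⬝ᵥ P *ᵥ x) := by
        rw [hPd]
        let L : Matrix (Fin d) (Fin d) ℝ →+ ℝ :=
          { toFun := fun N => star x ⬝ᵥ N *ᵥ x
            map_zero' := by simp
            map_add' := fun a b => by simp [Matrix.add_mulVec, dotProduct_add] }
        have hL : Continuous L := by
          change Continuous fun N : Matrix (Fin d) (Fin d) ℝ => star x ⬝ᵥ N *ᵥ x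
          fun_prop
        exact hsum.hasSum.map L hL
      exact h.nonneg fun t => (hterm t).dotProduct_mulVec_nonneg x
  have hly : P = S + Mᵀ * P * M := by
    have h := hsum.tsum_eq_zero_add
    rw [← hPd] at h
    refine h.trans ?_
    simp only [pow_zero, Matrix.transpose_one, one_mul, mul_one]
    congr 1
    rw [hPd, ← hsum.tsum_mul_left, ← (hsum.mul_left _).tsum_mul_right]
    refine tsum_congr fun t => ?_
    simp only [pow_succ, Matrix.transpose_mul, Matrix.mul_assoc]
  have hSx : ∀ x : Fin d → ℝ, x ⬝ᵥ x ≤ x ⬝ᵥ S *ᵥ x := fun x => by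
    have := hS.dotProduct_mulVec_nonneg x
    simp only [star_trivial, Matrix.sub_mulVec, Matrix.one_mulVec, dotProduct_sub] at this
    linarith
  have hVx : ∀ x : Fin d → ℝ, x ⬝ᵥ P *ᵥ x = x ⬝ᵥ S *ᵥ x + (M *ᵥ x) ⬝ᵥ P *ᵥ (M *ᵥ x) := fun x => by
    conv_lhs => rw [hly]
    rw [Matrix.add_mulVec, dotProduct_add, ← Matrix.mulVec_mulVec, ← Matrix.mulVec_mulVec,
      Matrix.dotProduct_mulVec x Mᵀ, Matrix.vecMul_transpose]
  have hV0 : ∀ x : Fin d → ℝ, 0 ≤ x ⬝ᵥ P *ᵥ x := fun x => by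
    simpa using hPsd.dotProduct_mulVec_nonneg x
  have hVlow : ∀ x : Fin d → ℝ, x ⬝ᵥ x ≤ x ⬝ᵥ P *ᵥ x := fun x => by
    have := hV0 (M *ᵥ x)
    linarith [hVx x, hSx x]
  have hup := quad_le_trace P hPsd
  have hT : 1 ≤ P.trace := by
    have h1 := hVlow (Pi.single ⟨0, hd⟩ 1)
    have h2 := hup (Pi.single ⟨0, hd⟩ 1)
    have h3 : (Pi.single ⟨0, hd⟩ 1 : Fin d → ℝ) ⬝ᵥ Pi.single ⟨0, hd⟩ 1 = 1 := by simp
    rw [h3] at h1 h2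
    linarith
  have hTp : 0 < P.trace := by linarith
  refine ⟨hT, fun t x => ?_⟩
  have hdec : ∀ t : ℕ, ((M ^ t) *ᵥ x) ⬝ᵥ P *ᵥ ((M ^ t) *ᵥ x) ≤
      Real.exp (-(t : ℝ) / P.trace) * (x ⬝ᵥ P *ᵥ x) := by
    intro t
    induction t with
    | zero => simp
    | succ t ih =>
      set y := (M ^ t) *ᵥ x with hy
      have e1 : (M ^ (t + 1)) *ᵥ x = M *ᵥ y := by
        rw [hy, Matrix.mulVec_mulVec, pow_succ']
      rw [e1]
      have e2 : Real.exp (-((t + 1 : ℕ) : ℝ) / P.trace) =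
          Real.exp (-1 / P.trace) * Real.exp (-(t : ℝ) / P.trace) := by
        rw [← Real.exp_add]; congr 1; push_cast; ring
      rw [e2, mul_assoc]
      have h1 : (M *ᵥ y) ⬝ᵥ P *ᵥ (M *ᵥ y) ≤ (1 - 1 / P.trace) * (y ⬝ᵥ P *ᵥ y) := by
        have h2 : 1 / P.trace * (y ⬝ᵥ P *ᵥ y) ≤ y ⬝ᵥ y := by
          rw [one_div, inv_mul_le_iff₀ hTp]
          exact hup y
        linarith [hVx y, hSx y]
      have h3 : 1 - 1 / P.trace ≤ Real.exp (-1 / P.trace) := by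
        have := Real.add_one_le_exp (-1 / P.trace)
        have e : -1 / P.trace = -(1 / P.trace) := by ring
        rw [e] at this ⊢
        linarith
      calc _ ≤ _ := h1
        _ ≤ Real.exp (-1 / P.trace) * (y ⬝ᵥ P *ᵥ y) := mul_le_mul_of_nonneg_right h3 (hV0 y)
        _ ≤ _ := mul_le_mul_of_nonneg_left ih (Real.exp_pos _).le
  rw [ev_sq, ev_sq]
  calc _ ≤ _ := hVlow _
    _ ≤ _ := hdec t
    _ ≤ Real.exp (-(t : ℝ) / P.trace) * (P.trace * (x ⬝ᵥ x)) :=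
      mul_le_mul_of_nonneg_left (hup x) (Real.exp_pos _).le
    _ = _ := by ring

/-- If `Q ⪰ I`, `R ⪰ 0`, `K̂` and `K⋆` are stabilizing with value matrices `P̂, P⋆`, and
`tr P̂ ≤ 2 tr P⋆`, then `K̂` is `(√(2 tr P⋆), (4 tr P⋆)⁻¹)`-exponentially stable. -/
theorem near_optimal_implies_exp_stable {d m : ℕ}
    (A : Matrix (Fin d) (Fin d) ℝ) (B : Matrix (Fin d) (Fin m) ℝ)
    (Q : Matrix (Fin d) (Fin d) ℝ) (R : Matrix (Fin m) (Fin m) ℝ)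
    (hQ : (Q - 1).PosSemidef) (hR : R.PosSemidef)
    (Khat Kstar : Matrix (Fin m) (Fin d) ℝ)
    (hKhat : IsStable (A + B * Khat)) (hKstar : IsStable (A + B * Kstar))
    (htr : (lyapP A B Q R Khat).trace ≤ 2 * (lyapP A B Q R Kstar).trace) :
    ∀ (t : ℕ) (x0 : Fin d → ℝ),
      evnorm (((A + B * Khat) ^ t).mulVec x0)
        ≤ Real.sqrt (2 * (lyapP A B Q R Kstar).trace)
            * Real.exp (-(t : ℝ) / (4 * (lyapP A B Q R Kstar).trace)) * evnorm x0 := by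
  intro t x0
  rcases Nat.eq_zero_or_pos d with hd | hd
  · subst hd
    have e1 : ∀ y : Fin 0 → ℝ, evnorm y = 0 := fun y => by
      have := ev_sq y
      simpa using this
    rw [e1, e1]; simp
  have hS : (Q + Khatᵀ * R * Khat - 1).PosSemidef := by
    have h := hR.conjTranspose_mul_mul_same Khat
    rw [Matrix.conjTranspose_eq_transpose_of_trivial] at h
    have h2 := hQ.add h
    have e : Q + Khatᵀ * R * Khat - 1 = Q - 1 + Khatᵀ * R * Khat := by abel
    rwa [e]
  obtain ⟨hT, hb⟩ := core hd (A + B * Khat) _ hKhat hS (lyapP A B Q R Khat) rfl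
  have hb := hb t x0
  set T := (lyapP A B Q R Khat).trace
  set T' := (lyapP A B Q R Kstar).trace
  have hTp : 0 < T := by linarith
  have hT'p : 0 < 2 * T' := by linarith
  have hn : ∀ y : Fin d → ℝ, 0 ≤ evnorm y := fun y => norm_nonneg _
  have hn0 := hn x0
  refine le_trans (le_abs_self _) (abs_le_of_sq_le_sq ?_ (by positivity))
  rw [mul_pow, mul_pow, Real.sq_sqrt hT'p.le, ← Real.exp_nat_mul]
  refine hb.trans ?_
  have e : ((2 : ℕ) : ℝ) * (-(t : ℝ) / (4 * T')) = -((t : ℝ) / (2 * T')) := by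
    push_cast; field_simp; ring
  rw [e, neg_div]
  gcongr
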